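/- arXiv:1207.5295 — 4 statements merged into one kernel-verified Lean document; each statement's English description precedes it below -/
import Mathlib

section
/- Let f : X → G(Z,C) be convex, x₀ ∈ dom f and z* ∈ C⁻ \ {0} such that the function x ↦ f(x) ⊕ H(z*) is proper (it has nonempty domain and never takes the value Z) and the scalarization φ_{f,z*} is upper semicontinuous at x₀. Then ∂_{z*} f(x₀) ≠ ∅, for every x ∈ X one has f'_{z*}(x₀, x) = ⋂_{x* ∈ ∂_{z*} f(x₀)} S_{(x*,z*)}(x), and for every x ∈ X there exists x₀* ∈ ∂_{z*} f(x₀) with f'_{z*}(x₀, x) = S_{(x₀*,z*)}(x). -/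
open Set Topology Pointwise

noncomputable section

variable {X Z : Type*}

/-- The family `G(Z,C)` of subsets `A` with `A = cl co (A + C)`. -/
def Gset [AddCommGroup Z] [Module ℝ Z] [TopologicalSpace Z] (C : Set Z) : Set (Set Z) :=
  {A | A = closure (convexHull ℝ (A + C))}

/-- `A ⊕ B = cl (A + B)` (Minkowski sum, with `A + ∅ = ∅`). -/
def oplus [AddCommGroup Z] [TopologicalSpace Z] (A B : Set Z) : Set Z :=
  closure (A + B)

/-- The homogeneous closed half-space `H(z*) = {z : z*(z) ≤ 0}`. -/
def Hset [TopologicalSpace Z] [AddCommGroup Z] [Module ℝ Z] (zs : Z →L[ℝ] ℝ) : Set Z :=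
  {z | zs z ≤ 0}

/-- `A −_{z*} B = {z : B + z ⊆ A ⊕ H(z*)}`. -/
def resid [TopologicalSpace Z] [AddCommGroup Z] [Module ℝ Z]
    (zs : Z →L[ℝ] ℝ) (A B : Set Z) : Set Z :=
  {z | ∀ b ∈ B, b + z ∈ oplus A (Hset zs)}

/-- Convexity of a set-valued function: `f(t x₁ + (1-t) x₂) ⊇ t f(x₁) ⊕ (1-t) f(x₂)`. -/
def ConvexSV [AddCommGroup X] [Module ℝ X] [TopologicalSpace Z] [AddCommGroup Z] [Module ℝ Z]
    (f : X → Set Z) : Prop :=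
  ∀ x₁ x₂ : X, ∀ t : ℝ, 0 < t → t < 1 →
    oplus (t • f x₁) ((1 - t) • f x₂) ⊆ f (t • x₁ + (1 - t) • x₂)

/-- Directional derivative `f'_{z*}(x₀, x) = ⋂_{s>0} cl ⋃_{0<t<s} (1/t)(f(x₀+tx) −_{z*} f(x₀))`. -/
def dirDer [AddCommGroup X] [Module ℝ X] [TopologicalSpace Z] [AddCommGroup Z] [Module ℝ Z]
    (zs : Z →L[ℝ] ℝ) (f : X → Set Z) (x₀ x : X) : Set Z :=
  ⋂ s ∈ Ioi (0:ℝ), closure (⋃ t ∈ Ioo (0:ℝ) s, (1 / t) • resid zs (f (x₀ + t • x)) (f x₀))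

/-- `S_{(x*,z*)}(x) = {z : x*(x) + z*(z) ≤ 0}`. -/
def Sfun [TopologicalSpace X] [AddCommGroup X] [Module ℝ X]
    [TopologicalSpace Z] [AddCommGroup Z] [Module ℝ Z]
    (xs : X →L[ℝ] ℝ) (zs : Z →L[ℝ] ℝ) (x : X) : Set Z :=
  {z | xs x + zs z ≤ 0}

/-- The `z*`-subdifferential of `f` at `x₀`. -/
def subdiff [TopologicalSpace X] [AddCommGroup X] [Module ℝ X]
    [TopologicalSpace Z] [AddCommGroup Z] [Module ℝ Z]
    (zs : Z →L[ℝ] ℝ) (f : X → Set Z) (x₀ : X) : Set (X →L[ℝ] ℝ) :=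
  {xs | ∀ x : X, dirDer zs f x₀ x ⊆ Sfun xs zs x}

/-- Scalarization `φ_{f,z*}(x) = inf{−z*(z) : z ∈ f(x)}` taking values in `EReal`. -/
def scalFn [TopologicalSpace Z] [AddCommGroup Z] [Module ℝ Z]
    (zs : Z →L[ℝ] ℝ) (f : X → Set Z) (x : X) : EReal :=
  ⨅ z ∈ f x, ((-(zs z) : ℝ) : EReal)

/-- Inf-residuation on `EReal`: `r −• s = inf {t ∈ ℝ : r ≤ s + t}`. -/
def eresid (r s : EReal) : EReal :=
  sInf {t : EReal | ∃ t' : ℝ, t = (t' : EReal) ∧ r ≤ s + (t' : EReal)}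

/-- Scalar directional derivative `φ'_{f,z*}(x₀,x) = inf_{t>0} (1/t)(φ(x₀+tx) −• φ(x₀))`. -/
def scalDer [AddCommGroup X] [Module ℝ X] [TopologicalSpace Z] [AddCommGroup Z] [Module ℝ Z]
    (zs : Z →L[ℝ] ℝ) (f : X → Set Z) (x₀ x : X) : EReal :=
  ⨅ t ∈ Ioi (0:ℝ), (((1 / t : ℝ) : EReal) * eresid (scalFn zs f (x₀ + t • x)) (scalFn zs f x₀))

/-- Inf-translation `f̂(x; M) = cl co ⋃_{m ∈ M} f(m + x)`. -/
def infTrans [AddCommGroup X] [TopologicalSpace Z] [AddCommGroup Z] [Module ℝ Z]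
    (f : X → Set Z) (M : Set X) (x : X) : Set Z :=
  closure (convexHull ℝ (⋃ m ∈ M, f (m + x)))

end

/-!
The scalarization `φ = scalFn zs f` turns the set-valued problem into a scalar one: `resid` is the
half-space cut out by a difference of values of `φ`, so `dirDer zs f x₀ v` is the half-space
`{z | φ'(x₀; v) + zs z ≤ 0}`. Convexity of `f` makes `φ` convex, and upper semicontinuity at `x₀`
bounds `φ` above near `x₀`; hence `φ` is finite near `x₀` and `φ'(x₀; ·)` is sublinear and bounded
above near `0`. By Hahn-Banach some linear `l ≤ φ'(x₀; ·)` agrees with `φ'(x₀; ·)` at a prescribed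
`v`, and such an `l` is automatically continuous.
-/

open Filter

section Sublinear

variable {E : Type*} [AddCommGroup E] [Module ℝ E]

theorem exists_linearMap_le_sublinear_eq (p : E → ℝ)
    (p_smul : ∀ c : ℝ, 0 < c → ∀ x, p (c • x) = c * p x)
    (p_add : ∀ x y, p (x + y) ≤ p x + p y) (x : E) :
    ∃ l : E →ₗ[ℝ] ℝ, (∀ y, l y ≤ p y) ∧ l x = p x := by
  have p_zero : p 0 = 0 := by
    have h := p_smul 2 two_pos 0
    rw [smul_zero] at h
    linarith
  have mul_le (c : ℝ) : c * p x ≤ p (c • x) := by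
    rcases lt_trichotomy c 0 with hc | rfl | hc
    · have h := p_add (c • x) ((-c) • x)
      rw [← add_smul, add_neg_cancel, zero_smul, p_zero, p_smul (-c) (neg_pos.2 hc)] at h
      linarith
    · simp [p_zero]
    · exact (p_smul c hc x).ge
  have smul_eq_zero_of (c : ℝ) (h : c • x = 0) : c • p x = 0 := by
    rcases smul_eq_zero.1 h with rfl | rfl
    · exact zero_smul ℝ _
    · rw [p_zero, smul_zero]
  obtain ⟨l, hext, hle⟩ := exists_extension_of_le_sublinear
    (LinearPMap.mkSpanSingleton' x (p x) smul_eq_zero_of) p p_smul p_add <| by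
      rintro ⟨_, hy⟩
      obtain ⟨c, rfl⟩ := Submodule.mem_span_singleton.1 hy
      simpa only [LinearPMap.mkSpanSingleton'_apply, smul_eq_mul, RingHom.id_apply] using mul_le c
  refine ⟨l, hle, ?_⟩
  exact (hext ⟨x, Submodule.mem_span_singleton_self x⟩).trans
    (LinearPMap.mkSpanSingleton'_apply_self (R := ℝ) x (p x) smul_eq_zero_of _)

variable [TopologicalSpace E] [IsTopologicalAddGroup E] [ContinuousSMul ℝ E]

theorem continuous_of_eventually_le (l : E →ₗ[ℝ] ℝ) {c : ℝ} (hl : ∀ᶠ x in 𝓝 (0 : E), l x ≤ c) :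
    Continuous l := by
  rcases eq_or_ne l 0 with rfl | hl0
  · exact continuous_const
  obtain ⟨U, hU, hUo, h0U⟩ := eventually_nhds_iff.1 hl
  obtain ⟨e, he⟩ := LinearMap.surjective hl0 (-(c + 1))
  refine l.continuous_of_nonzero_on_open (e +ᵥ U) (hUo.vadd e) ⟨_, vadd_mem_vadd_set h0U⟩ ?_
  rintro _ ⟨x, hx, rfl⟩
  have hxc : l x ≤ c := hU x hx
  have hneg : l (e +ᵥ x) < 0 := by
    rw [vadd_eq_add, map_add, he]
    linarith
  exact hneg.ne

theorem exists_continuousLinearMap_le_sublinear_eq (p : E → ℝ)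
    (p_smul : ∀ c : ℝ, 0 < c → ∀ x, p (c • x) = c * p x)
    (p_add : ∀ x y, p (x + y) ≤ p x + p y) {c : ℝ} (p_le : ∀ᶠ x in 𝓝 (0 : E), p x ≤ c) (x : E) :
    ∃ l : E →L[ℝ] ℝ, (∀ y, l y ≤ p y) ∧ l x = p x := by
  obtain ⟨l, hle, hlx⟩ := exists_linearMap_le_sublinear_eq p p_smul p_add x
  exact ⟨⟨l, continuous_of_eventually_le l (p_le.mono fun y hy ↦ (hle y).trans hy)⟩, hle, hlx⟩

end Sublinear

section RightLineDeriv

variable {E : Type*} [AddCommGroup E] [Module ℝ E]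

/-- The one-sided directional derivative `g'(x; v) = lim_{t ↓ 0} (g (x + t v) - g x) / t`, with the
junk value `0` where the limit does not exist. -/
noncomputable def rightLineDeriv (g : E → ℝ) (x v : E) : ℝ :=
  derivWithin (fun t : ℝ ↦ g (x + t • v)) (Ioi 0) 0

theorem rightLineDeriv_smul (g : E → ℝ) (x v : E) {c : ℝ} (hc : 0 < c) :
    rightLineDeriv g x (c • v) = c * rightLineDeriv g x v := by
  have h := derivWithin_comp_mul_left c (fun t : ℝ ↦ g (x + t • v)) (Ioi 0) 0
  rw [LinearOrderedField.smul_Ioi hc, mul_zero, smul_eq_mul] at h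
  simpa only [rightLineDeriv, smul_smul, mul_comm c] using h

variable {D : Set E} {g : E → ℝ} {x : E}

theorem convexOn_comp_line (hg : ConvexOn ℝ D g) (x v : E) :
    ConvexOn ℝ {t : ℝ | x + t • v ∈ D} fun t ↦ g (x + t • v) := by
  have h := hg.comp_affineMap (AffineMap.lineMap x (x + v))
  simpa only [Function.comp_def, preimage, AffineMap.lineMap_apply, vsub_eq_sub, vadd_eq_add,
    add_sub_cancel_left, add_comm _ x] using h

variable [TopologicalSpace E] [ContinuousAdd E] [ContinuousSMul ℝ E]

theorem zero_mem_interior_line (hD : D ∈ 𝓝 x) (v : E) :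
    (0 : ℝ) ∈ interior {t : ℝ | x + t • v ∈ D} := by
  have h : ContinuousAt (fun t : ℝ ↦ x + t • v) 0 := by fun_prop
  exact mem_interior_iff_mem_nhds.2 (h (by simpa using hD))

theorem eventually_add_smul_mem (hD : D ∈ 𝓝 x) (v : E) : ∀ᶠ t : ℝ in 𝓝[>] 0, x + t • v ∈ D :=
  nhdsWithin_le_nhds (mem_interior_iff_mem_nhds.1 (zero_mem_interior_line hD v))

theorem tendsto_rightLineDeriv (hg : ConvexOn ℝ D g) (hD : D ∈ 𝓝 x) (v : E) :
    Tendsto (fun t : ℝ ↦ (g (x + t • v) - g x) / t) (𝓝[>] 0) (𝓝 (rightLineDeriv g x v)) := by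
  have h := (convexOn_comp_line hg x v).hasDerivWithinAt_rightDeriv_of_mem_interior
    (zero_mem_interior_line hD v)
  rw [hasDerivWithinAt_iff_tendsto_slope' self_notMem_Ioi] at h
  simpa only [rightLineDeriv, slope_fun_def_field, zero_smul, add_zero, sub_zero] using h

theorem rightLineDeriv_le_div (hg : ConvexOn ℝ D g) (hD : D ∈ 𝓝 x) {v : E} {t : ℝ} (ht : 0 < t)
    (htD : x + t • v ∈ D) : rightLineDeriv g x v ≤ (g (x + t • v) - g x) / t := by
  have h := (convexOn_comp_line hg x v).rightDeriv_le_slope_of_mem_interior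
    (zero_mem_interior_line hD v) htD ht
  simpa only [rightLineDeriv, slope_def_field, zero_smul, add_zero, sub_zero] using h

theorem rightLineDeriv_add_le (hg : ConvexOn ℝ D g) (hD : D ∈ 𝓝 x) (v w : E) :
    rightLineDeriv g x (v + w) ≤ rightLineDeriv g x v + rightLineDeriv g x w := by
  -- `x + t (v + w)` is the midpoint of `x + t (2 v)` and `x + t (2 w)`.
  have midpoint_le : rightLineDeriv g x (v + w) ≤
      (rightLineDeriv g x ((2 : ℝ) • v) + rightLineDeriv g x ((2 : ℝ) • w)) / 2 := by
    refine le_of_tendsto_of_tendsto (tendsto_rightLineDeriv hg hD _)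
      (((tendsto_rightLineDeriv hg hD _).add (tendsto_rightLineDeriv hg hD _)).div_const 2) ?_
    filter_upwards [self_mem_nhdsWithin, eventually_add_smul_mem hD ((2 : ℝ) • v),
      eventually_add_smul_mem hD ((2 : ℝ) • w)] with t ht hv hw
    have hmid := hg.2 hv hw (by norm_num : (0 : ℝ) ≤ 1 / 2) (by norm_num : (0 : ℝ) ≤ 1 / 2)
      (by norm_num)
    rw [show (1 / 2 : ℝ) • (x + t • (2 : ℝ) • v) + (1 / 2 : ℝ) • (x + t • (2 : ℝ) • w)
      = x + t • (v + w) by module, smul_eq_mul, smul_eq_mul] at hmid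
    rw [← add_div, div_right_comm]
    exact div_le_div_of_nonneg_right (by linarith) (le_of_lt ht)
  rw [rightLineDeriv_smul g x v two_pos, rightLineDeriv_smul g x w two_pos] at midpoint_le
  linarith

end RightLineDeriv

theorem exists_continuousLinearMap_le_rightLineDeriv_eq {E : Type*} [AddCommGroup E] [Module ℝ E]
    [TopologicalSpace E] [IsTopologicalAddGroup E] [ContinuousSMul ℝ E] {D : Set E} {g : E → ℝ}
    {x : E} (hg : ConvexOn ℝ D g) (hD : D ∈ 𝓝 x) {c : ℝ} (hbdd : ∀ᶠ y in 𝓝 x, g y ≤ c) (v : E) :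
    ∃ l : E →L[ℝ] ℝ, (∀ w, l w ≤ rightLineDeriv g x w) ∧ l v = rightLineDeriv g x v := by
  refine exists_continuousLinearMap_le_sublinear_eq _ (fun a ha w ↦ rightLineDeriv_smul g x w ha)
    (rightLineDeriv_add_le hg hD) (c := c - g x) ?_ v
  have tendsto_add : Tendsto (fun w : E ↦ x + w) (𝓝 0) (𝓝 x) := by
    simpa using (continuous_const_add x).tendsto 0
  filter_upwards [tendsto_add.eventually hbdd, tendsto_add hD] with w hw hwD
  have h := rightLineDeriv_le_div hg hD (v := w) one_pos (by rwa [one_smul])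
  rw [one_smul, div_one] at h
  linarith

/-- Convexity of an extended-real-valued function, expressed by its strict epigraph so that no value
has to be assigned to `⊤ + ⊥`. -/
def ERealConvex {E : Type*} [AddCommGroup E] [Module ℝ E] (φ : E → EReal) : Prop :=
  Convex ℝ {p : E × ℝ | φ p.1 < p.2}

namespace ERealConvex

variable {E : Type*} [AddCommGroup E] [Module ℝ E] {φ : E → EReal}

theorem map_combo_lt (hφ : ERealConvex φ) {x y : E} {r s a b : ℝ} (hx : φ x < r) (hy : φ y < s)
    (ha : 0 ≤ a) (hb : 0 ≤ b) (hab : a + b = 1) :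
    φ (a • x + b • y) < ((a * r + b * s : ℝ) : EReal) :=
  hφ (x := (x, r)) hx (y := (y, s)) hy ha hb hab

theorem convexOn_toReal (hφ : ERealConvex φ) (hbot : ∀ x, φ x ≠ ⊥) :
    ConvexOn ℝ {x | φ x < ⊤} (EReal.toReal ∘ φ) := by
  have lt_toReal_add {x : E} (hx : φ x < ⊤) {ε : ℝ} (hε : 0 < ε) :
      φ x < (((φ x).toReal + ε : ℝ) : EReal) := by
    conv_lhs => rw [← EReal.coe_toReal hx.ne (hbot x)]
    exact EReal.coe_lt_coe (lt_add_of_pos_right _ hε)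
  have combo_lt {x y : E} (hx : φ x < ⊤) (hy : φ y < ⊤) {a b : ℝ} (ha : 0 ≤ a) (hb : 0 ≤ b)
      (hab : a + b = 1) {ε : ℝ} (hε : 0 < ε) :
      φ (a • x + b • y) < ((a * (φ x).toReal + b * (φ y).toReal + ε : ℝ) : EReal) := by
    convert hφ.map_combo_lt (lt_toReal_add hx hε) (lt_toReal_add hy hε) ha hb hab using 2
    linear_combination -ε * hab
  refine ⟨fun x hx y hy a b ha hb hab ↦
    (combo_lt hx hy ha hb hab one_pos).trans (EReal.coe_lt_top _),
    fun x hx y hy a b ha hb hab ↦ le_of_forall_pos_le_add fun ε hε ↦ ?_⟩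
  exact EReal.toReal_le_toReal (combo_lt hx hy ha hb hab hε).le (hbot _) (EReal.coe_ne_top _)

theorem ne_bot [TopologicalSpace E] [ContinuousAdd E] [ContinuousSMul ℝ E]
    (hφ : ERealConvex φ) {x₀ : E} (hx₀ : φ x₀ ≠ ⊥) (hdom : {x | φ x < ⊤} ∈ 𝓝 x₀) (x : E) :
    φ x ≠ ⊥ := by
  intro hx
  -- Extend the segment from `x` to `x₀` slightly beyond `x₀`, to a point of the domain of `φ`.
  obtain ⟨t, htdom, ht⟩ :=
    ((eventually_add_smul_mem hdom (x₀ - x)).and eventually_mem_nhdsWithin).exists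
  rw [mem_Ioi] at ht
  obtain ⟨r, hr, -⟩ := EReal.lt_iff_exists_real_btwn.1 htdom
  refine hx₀ (EReal.eq_bot_iff_forall_lt _ |>.2 fun s ↦ ?_)
  have h := hφ.map_combo_lt hr (hx ▸ EReal.bot_lt_coe (((1 + t) * s - r) / t))
    (by positivity : 0 ≤ 1 / (1 + t)) (by positivity : 0 ≤ t / (1 + t)) (by field_simp)
  convert h using 2
  · match_scalars <;> field_simp
    ring
  · field_simp
    ring

end ERealConvex

section HalfSpace

variable {Z : Type*} [AddCommGroup Z] [Module ℝ Z] [TopologicalSpace Z]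

theorem ne_zero_of_oplus_Hset_ne_univ {zs : Z →L[ℝ] ℝ} {A : Set Z} (hA : A.Nonempty)
    (h : oplus A (Hset zs) ≠ univ) : zs ≠ 0 := by
  rintro rfl
  have Hset_zero : Hset (0 : Z →L[ℝ] ℝ) = univ := by
    simp only [Hset, zero_apply, le_refl, ofPred_true]
  exact h (by rw [oplus, Hset_zero, add_univ hA, closure_univ])

theorem mem_closure_setOf_lt [ContinuousAdd Z] [ContinuousSMul ℝ Z] {zs : Z →L[ℝ] ℝ}
    (hzs : zs ≠ 0) {m : ℝ} {z : Z} (hz : zs z ≤ m) : z ∈ closure {w | zs w < m} := by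
  have h := (zs.isOpenMap_of_ne_zero hzs).preimage_closure_eq_closure_preimage zs.continuous (Iio m)
  rw [closure_Iio] at h
  exact h.subset hz

end HalfSpace

section Scalarization

variable {X Z : Type*} [AddCommGroup Z] [Module ℝ Z] [TopologicalSpace Z]
  {zs : Z →L[ℝ] ℝ} {f : X → Set Z}

theorem scalFn_le_of_mem {x : X} {z : Z} (hz : z ∈ f x) :
    scalFn zs f x ≤ ((-zs z : ℝ) : EReal) :=
  iInf₂_le z hz

theorem scalFn_lt_iff {x : X} {r : EReal} :
    scalFn zs f x < r ↔ ∃ z ∈ f x, ((-zs z : ℝ) : EReal) < r := by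
  simp only [scalFn, iInf_lt_iff, exists_prop]

theorem scalFn_lt_top_iff {x : X} : scalFn zs f x < ⊤ ↔ (f x).Nonempty := by
  simp only [scalFn_lt_iff, EReal.coe_lt_top, and_true, Set.Nonempty]

theorem erealConvex_scalFn [AddCommGroup X] [Module ℝ X] (hf : ConvexSV f) :
    ERealConvex (scalFn zs f) := by
  refine convex_iff_forall_pos.2 fun ⟨x, r⟩ hx ⟨y, s⟩ hy a b ha hb hab ↦ ?_
  obtain ⟨z, hz, hzr⟩ := scalFn_lt_iff.1 hx
  obtain ⟨w, hw, hws⟩ := scalFn_lt_iff.1 hy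
  obtain rfl : b = 1 - a := by linarith
  refine scalFn_lt_iff.2 ⟨a • z + (1 - a) • w, hf x y a ha (by linarith) <|
    subset_closure (add_mem_add (smul_mem_smul_set hz) (smul_mem_smul_set hw)), ?_⟩
  rw [EReal.coe_lt_coe_iff] at hzr hws ⊢
  simp only [map_add, map_smul, smul_eq_mul, Prod.smul_mk, Prod.mk_add_mk]
  linarith [mul_lt_mul_of_pos_left hzr ha, mul_lt_mul_of_pos_left hws hb]

variable [ContinuousAdd Z] [ContinuousSMul ℝ Z]

theorem mem_oplus_Hset_iff (hzs : zs ≠ 0) {x : X} {z : Z} :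
    z ∈ oplus (f x) (Hset zs) ↔ scalFn zs f x ≤ ((-zs z : ℝ) : EReal) := by
  refine ⟨fun hz ↦ ?_, fun hz ↦ ?_⟩
  · have isClosed_le_neg : IsClosed {w : Z | scalFn zs f x ≤ ((-zs w : ℝ) : EReal)} :=
      isClosed_le continuous_const (continuous_coe_real_ereal.comp zs.continuous.neg)
    refine closure_minimal ?_ isClosed_le_neg hz
    rintro _ ⟨a, ha, b, hb, rfl⟩
    have hb : zs b ≤ 0 := hb
    refine (scalFn_le_of_mem ha).trans (EReal.coe_le_coe ?_)
    rw [map_add]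
    linarith
  · refine closure_mono (fun w hw ↦ ?_) (mem_closure_setOf_lt hzs le_rfl)
    obtain ⟨a, ha, haw⟩ := scalFn_lt_iff.1 (hz.trans_lt (EReal.coe_lt_coe (neg_lt_neg hw)))
    have hwa : w - a ∈ Hset zs := by
      rw [EReal.coe_lt_coe_iff] at haw
      simp only [Hset, mem_ofPred_eq, map_sub]
      linarith
    exact ⟨a, ha, w - a, hwa, add_sub_cancel a w⟩

theorem scalFn_ne_bot_of_oplus_Hset_ne_univ (hzs : zs ≠ 0) {x : X}
    (h : oplus (f x) (Hset zs) ≠ univ) : scalFn zs f x ≠ ⊥ := fun hbot ↦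
  h (eq_univ_of_forall fun _ ↦ (mem_oplus_Hset_iff hzs).2 (hbot ▸ bot_le))

theorem mem_resid_iff (hzs : zs ≠ 0) {x y : X} {z : Z} :
    z ∈ resid zs (f x) (f y) ↔ scalFn zs f x + (zs z : EReal) ≤ scalFn zs f y := by
  have coe_neg_add (b : Z) :
      ((-zs (b + z) : ℝ) : EReal) = ((-zs b : ℝ) : EReal) - (zs z : EReal) := by
    rw [← EReal.coe_sub, map_add, neg_add']
  simp only [resid, mem_ofPred_eq, mem_oplus_Hset_iff hzs, coe_neg_add]
  rw [scalFn.eq_def zs f y, le_iInf₂_iff]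
  exact forall₂_congr fun b _ ↦ EReal.le_sub_iff_add_le (.inl (EReal.coe_ne_bot _))
    (.inl (EReal.coe_ne_top _))

end Scalarization

section DirDer

variable {X Z : Type*} [AddCommGroup Z] [Module ℝ Z] [TopologicalSpace Z]
  [ContinuousAdd Z] [ContinuousSMul ℝ Z] [AddCommGroup X] [Module ℝ X]
  {zs : Z →L[ℝ] ℝ} {f : X → Set Z} {x₀ : X}

theorem mem_smul_resid_iff (hzs : zs ≠ 0) (hbot : ∀ x, scalFn zs f x ≠ ⊥)
    (hx₀ : scalFn zs f x₀ < ⊤) {v : X} {t : ℝ} (ht : 0 < t) {z : Z} :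
    z ∈ (1 / t) • resid zs (f (x₀ + t • v)) (f x₀) ↔ scalFn zs f (x₀ + t • v) < ⊤ ∧
      ((scalFn zs f (x₀ + t • v)).toReal - (scalFn zs f x₀).toReal) / t + zs z ≤ 0 := by
  rw [one_div, mem_inv_smul_set_iff₀ ht.ne', mem_resid_iff hzs]
  rcases eq_or_ne (scalFn zs f (x₀ + t • v)) ⊤ with htop | htop
  · simp only [htop, EReal.top_add_coe, top_le_iff, hx₀.ne, lt_irrefl, false_and]
  · lift scalFn zs f (x₀ + t • v) to ℝ using ⟨htop, hbot _⟩ with a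
    lift scalFn zs f x₀ to ℝ using ⟨hx₀.ne, hbot _⟩ with b
    rw [← EReal.coe_add, EReal.coe_le_coe_iff, map_smul, smul_eq_mul, EReal.toReal_coe,
      EReal.toReal_coe, div_add' _ _ _ ht.ne', div_le_iff₀ ht]
    simp only [EReal.coe_lt_top, true_and]
    constructor <;> intro h <;> linarith

variable [TopologicalSpace X] [ContinuousAdd X] [ContinuousSMul ℝ X]

theorem mem_dirDer_iff (hzs : zs ≠ 0) (hf : ConvexSV f) (hbot : ∀ x, scalFn zs f x ≠ ⊥)
    (hdom : {x | scalFn zs f x < ⊤} ∈ 𝓝 x₀) {v : X} {z : Z} :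
    z ∈ dirDer zs f x₀ v ↔ rightLineDeriv (EReal.toReal ∘ scalFn zs f) x₀ v + zs z ≤ 0 := by
  have hconv := (erealConvex_scalFn (zs := zs) hf).convexOn_toReal hbot
  have hx₀ : x₀ ∈ {x | scalFn zs f x < ⊤} := mem_of_mem_nhds hdom
  simp only [dirDer, mem_iInter, mem_Ioi]
  refine ⟨fun hz ↦ ?_, fun hz s hs ↦ ?_⟩
  · have isClosed_halfSpace :
        IsClosed {w | rightLineDeriv (EReal.toReal ∘ scalFn zs f) x₀ v + zs w ≤ 0} :=
      isClosed_le (by fun_prop) continuous_const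
    refine closure_minimal (iUnion₂_subset fun t ht w hw ↦ ?_) isClosed_halfSpace (hz 1 one_pos)
    obtain ⟨htv, hle⟩ := (mem_smul_resid_iff hzs hbot hx₀ ht.1).1 hw
    exact (add_le_add_left (rightLineDeriv_le_div hconv hdom ht.1 htv) _).trans hle
  · refine closure_mono (fun w hw ↦ ?_) (mem_closure_setOf_lt hzs (le_neg_iff_add_nonpos_left.2 hz))
    have quotient_lt :=
      (tendsto_rightLineDeriv hconv hdom v).eventually_lt_const (lt_neg_of_lt_neg hw)
    obtain ⟨t, hlt, htv, ht⟩ := (quotient_lt.and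
      ((eventually_add_smul_mem hdom v).and (Ioo_mem_nhdsGT hs))).exists
    refine mem_iUnion₂.2 ⟨t, ht, (mem_smul_resid_iff hzs hbot hx₀ ht.1).2 ⟨htv, ?_⟩⟩
    exact (lt_neg_iff_add_neg.1 hlt).le

end DirDer

section Subdifferential

variable {Z : Type*} [AddCommGroup Z] [Module ℝ Z] [TopologicalSpace Z]
  [ContinuousAdd Z] [ContinuousSMul ℝ Z]
  {X : Type*} [AddCommGroup X] [Module ℝ X] [TopologicalSpace X]
  [IsTopologicalAddGroup X] [ContinuousSMul ℝ X]
  {zs : Z →L[ℝ] ℝ} {f : X → Set Z} {x₀ : X}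

theorem exists_mem_subdiff_dirDer_eq_Sfun (hf : ConvexSV f) (hx₀ : (f x₀).Nonempty)
    (hval : oplus (f x₀) (Hset zs) ≠ univ) (husc : UpperSemicontinuousAt (scalFn zs f) x₀)
    (v : X) : ∃ xs ∈ subdiff zs f x₀, dirDer zs f x₀ v = Sfun xs zs v := by
  have hzs : zs ≠ 0 := ne_zero_of_oplus_Hset_ne_univ hx₀ hval
  have hφ : ERealConvex (scalFn zs f) := erealConvex_scalFn hf
  have hdom : {x | scalFn zs f x < ⊤} ∈ 𝓝 x₀ := husc ⊤ (scalFn_lt_top_iff.2 hx₀)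
  have hbot : ∀ x, scalFn zs f x ≠ ⊥ :=
    hφ.ne_bot (scalFn_ne_bot_of_oplus_Hset_ne_univ hzs hval) hdom
  obtain ⟨c, hc, -⟩ := EReal.lt_iff_exists_real_btwn.1 (scalFn_lt_top_iff.2 hx₀)
  have hbdd : ∀ᶠ x in 𝓝 x₀, (scalFn zs f x).toReal ≤ c :=
    (husc c hc).mono fun x hx ↦ EReal.toReal_le_toReal hx.le (hbot x) (EReal.coe_ne_top c)
  obtain ⟨l, hle, hlv⟩ := exists_continuousLinearMap_le_rightLineDeriv_eq
    (hφ.convexOn_toReal hbot) hdom hbdd v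
  refine ⟨l, fun w z hz ↦ ?_, ?_⟩
  · exact (add_le_add_left (hle w) _).trans ((mem_dirDer_iff hzs hf hbot hdom).1 hz)
  · ext z
    rw [mem_dirDer_iff hzs hf hbot hdom, Sfun, mem_ofPred_eq, hlv]

theorem stmt15_general (hf : ConvexSV f) (hx₀ : (f x₀).Nonempty)
    (hval : oplus (f x₀) (Hset zs) ≠ univ) (husc : UpperSemicontinuousAt (scalFn zs f) x₀) :
    (subdiff zs f x₀).Nonempty ∧
    (∀ x : X, dirDer zs f x₀ x = ⋂ xs ∈ subdiff zs f x₀, Sfun xs zs x) ∧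
    (∀ x : X, ∃ xs ∈ subdiff zs f x₀, dirDer zs f x₀ x = Sfun xs zs x) := by
  have hex := exists_mem_subdiff_dirDer_eq_Sfun hf hx₀ hval husc
  refine ⟨(hex 0).imp fun _ ↦ And.left, fun x ↦ ?_, hex⟩
  obtain ⟨xs, hxs, heq⟩ := hex x
  exact (subset_iInter₂ fun _ hys ↦ hys x).antisymm ((iInter₂_subset xs hxs).trans heq.ge)

end Subdifferential

theorem stmt15 {Z : Type*} [AddCommGroup Z] [Module ℝ Z] [TopologicalSpace Z]
    [IsTopologicalAddGroup Z] [ContinuousSMul ℝ Z] [LocallyConvexSpace ℝ Z]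
    {X : Type*} [AddCommGroup X] [Module ℝ X] [TopologicalSpace X]
    [IsTopologicalAddGroup X] [ContinuousSMul ℝ X] [LocallyConvexSpace ℝ X]
    (C : Set Z) (hCconv : Convex ℝ C) (hC0 : (0:Z) ∈ C)
    (hCcone : ∀ t : ℝ, 0 < t → t • C ⊆ C) (hclC : closure C ≠ Set.univ)
    (zs : Z →L[ℝ] ℝ) (hzs : ∀ z ∈ C, zs z ≤ 0) (hzs0 : zs ≠ 0)
    (f : X → Set Z) (hf : ConvexSV f) (hfG : ∀ x : X, f x ∈ Gset C)
    (x₀ : X) (hx₀ : f x₀ ≠ ∅)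
    (hpdom : ∃ x : X, oplus (f x) (Hset zs) ≠ ∅)
    (hpval : ∀ x : X, oplus (f x) (Hset zs) ≠ Set.univ)
    (husc : UpperSemicontinuousAt (scalFn zs f) x₀) :
    (subdiff zs f x₀).Nonempty ∧
    (∀ x : X, dirDer zs f x₀ x = ⋂ xs ∈ subdiff zs f x₀, Sfun xs zs x) ∧
    (∀ x : X, ∃ xs ∈ subdiff zs f x₀, dirDer zs f x₀ x = Sfun xs zs x) := by
  exact stmt15_general hf (nonempty_iff_ne_empty.2 hx₀) (hpval x₀) husc
end

section
/- Let f : X → G(Z,C) be convex, x₀ ∈ dom f, x* ∈ X* and z* ∈ C⁻ \ {0} with f(x₀) ⊕ H(z*) ≠ Z. Then the following are equivalent: (a) x* ∈ ∂_{z*} f(x₀); (b) cl ⋃_{x ∈ X} (f(x) + S_{(x*,z*)}(−x)) = f(x₀) ⊕ S_{(x*,z*)}(−x₀); (c) ⋂_{x ∈ X} (S_{(x*,z*)}(x) −_{z*} f(x)) = S_{(x*,z*)}(x₀) −_{z*} f(x₀). -/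
open Set Topology Pointwise

/-!
Sets of the form `A + {z | z* z ≤ r}` are preimages under `z*` of lower sets of reals, and a
nonzero `z*` is an open surjection, so closures and inclusions of such sets can be compared in `ℝ`.
There, with `m = sup z*(f x₀)` (finite because `f x₀ ⊕ H(z*) ≠ Z`) and `V` the set of all values
`x* x + z* z` with `z ∈ f x`, each of (a), (b), (c) says that the supremum of `V`, the scalar
conjugate at `x*`, is attained at `x₀`: `sup V = x* x₀ + m`. For (a), convexity shows that
`f'_{z*}(x₀, x - x₀)` contains every `w` with `z* w = z* b - m` for some `b ∈ f x`.
-/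

section LowerSets

theorem closure_eq_Iic_iff_isLUB {α : Type*} [LinearOrder α] [TopologicalSpace α] [OrderTopology α]
    [DenselyOrdered α] [NoMinOrder α] {s : Set α} (hs : IsLowerSet s) {a : α} :
    closure s = Iic a ↔ IsLUB s a := by
  constructor
  · intro h
    rw [IsLUB, ← upperBounds_closure, h]
    exact isLUB_Iic
  · intro h
    have Iio_subset : Iio a ⊆ s := fun b hb =>
      let ⟨_, hc, hbc⟩ := (lt_isLUB_iff h).1 hb
      hs hbc.le hc
    have Iic_subset : Iic a ⊆ closure s := closure_Iio a ▸ closure_mono Iio_subset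
    exact (closure_minimal (fun _ hb => h.1 hb) isClosed_Iic).antisymm Iic_subset

theorem closure_lowerClosure_eq_Iic_iff_isLUB {α : Type*} [LinearOrder α] [TopologicalSpace α]
    [OrderTopology α] [DenselyOrdered α] [NoMinOrder α] {s : Set α} {a : α} :
    closure (lowerClosure s : Set α) = Iic a ↔ IsLUB s a := by
  rw [closure_eq_Iic_iff_isLUB (lowerClosure s).lower, IsLUB, upperBounds_lowerClosure, IsLUB]

theorem upperBounds_eq_Ici_iff_isLUB {α : Type*} [Preorder α] {s : Set α} {a : α} :
    upperBounds s = Ici a ↔ IsLUB s a :=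
  ⟨fun h => by rw [IsLUB, h]; exact isLeast_Ici, IsLUB.upperBounds_eq⟩

theorem forall_add_mem_iff_of_isLUB {α : Type*} [AddCommGroup α] [LinearOrder α]
    [IsOrderedAddMonoid α] [TopologicalSpace α] [OrderTopology α] {s t : Set α} {m y : α}
    (hm : IsLUB s m) (hs : s.Nonempty) (ht : IsClosed t) (htl : IsLowerSet t) :
    (∀ r ∈ s, r + y ∈ t) ↔ m + y ∈ t :=
  ⟨fun h => ht.closure_subset
      (map_mem_closure (f := (· + y)) (by fun_prop) (hm.mem_closure hs) h),
    fun h _ hr => htl (by gcongr; exact hm.1 hr) h⟩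

theorem isLUB_image_const_add {ι α : Type*} [AddCommGroup α] [PartialOrder α]
    [IsOrderedAddMonoid α] {g : ι → α} {s : Set ι} {m : α} (hm : IsLUB (g '' s) m) (a : α) :
    IsLUB ((fun i => a + g i) '' s) (a + m) := by
  simpa only [image_image, OrderIso.addLeft_apply] using (OrderIso.addLeft a).isLUB_image'.2 hm

end LowerSets

section HalfSpaces

variable {Z : Type*} [AddCommGroup Z] [Module ℝ Z] [TopologicalSpace Z] {zs : Z →L[ℝ] ℝ}

theorem surjective_of_clm_ne_zero (hzs0 : zs ≠ 0) : Function.Surjective zs :=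
  LinearMap.surjective_iff_ne_zero.2 fun h => hzs0 (ContinuousLinearMap.coe_injective h)

theorem add_halfSpace_eq_preimage_lowerClosure (A : Set Z) (r : ℝ) :
    A + zs ⁻¹' Iic r = zs ⁻¹' lowerClosure ((fun z => r + zs z) '' A) := by
  ext z
  simp only [mem_preimage, SetLike.mem_coe, mem_lowerClosure, exists_mem_image]
  constructor
  · rintro ⟨a, ha, b, hb : zs b ≤ r, rfl⟩
    exact ⟨a, ha, by simpa only [map_add, add_comm] using add_le_add_left hb (zs a)⟩
  · rintro ⟨a, ha, hz⟩
    refine ⟨a, ha, z - a, ?_, add_sub_cancel a z⟩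
    change zs (z - a) ≤ r
    rwa [map_sub, sub_le_iff_le_add]

variable [ContinuousAdd Z] [ContinuousSMul ℝ Z]

theorem closure_preimage_clm (hzs0 : zs ≠ 0) (s : Set ℝ) :
    closure (zs ⁻¹' s) = zs ⁻¹' closure s :=
  ((zs.isOpenMap_of_ne_zero hzs0).preimage_closure_eq_closure_preimage zs.continuous s).symm

theorem oplus_halfSpace (hzs0 : zs ≠ 0) (A : Set Z) (r : ℝ) :
    oplus A (zs ⁻¹' Iic r) =
      zs ⁻¹' closure (lowerClosure ((fun z => r + zs z) '' A) : Set ℝ) := by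
  rw [oplus, add_halfSpace_eq_preimage_lowerClosure, closure_preimage_clm hzs0]

theorem oplus_Hset (hzs0 : zs ≠ 0) (A : Set Z) :
    oplus A (Hset zs) = zs ⁻¹' closure (lowerClosure (zs '' A) : Set ℝ) := by
  have Hset_eq : Hset zs = zs ⁻¹' Iic 0 := rfl
  simp only [Hset_eq, oplus_halfSpace hzs0, zero_add]

theorem exists_isLUB_image_of_oplus_Hset_ne_univ (hzs0 : zs ≠ 0) {A : Set Z} (hA : A.Nonempty)
    (hAH : oplus A (Hset zs) ≠ univ) : ∃ m, IsLUB (zs '' A) m := by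
  refine Real.exists_isLUB (hA.image zs) ?_
  by_contra unbounded
  refine hAH (eq_univ_of_forall fun z => ?_)
  obtain ⟨r, hr, hzr⟩ := not_bddAbove_iff.1 unbounded (zs z)
  rw [oplus_Hset hzs0]
  exact subset_closure ⟨r, hr, hzr.le⟩

theorem mem_resid_iff_of_isLUB (hzs0 : zs ≠ 0) {A B : Set Z} {m : ℝ} (hA : A.Nonempty)
    (hm : IsLUB (zs '' A) m) {w : Z} :
    w ∈ resid zs B A ↔ m + zs w ∈ closure (lowerClosure (zs '' B) : Set ℝ) := by
  rw [← forall_add_mem_iff_of_isLUB hm (hA.image zs) isClosed_closure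
      (lowerClosure _).lower.closure, forall_mem_image, resid, oplus_Hset hzs0]
  simp only [mem_preimage, map_add]
  rfl

end HalfSpaces

section Conjugates

variable {Z : Type*} [AddCommGroup Z] [Module ℝ Z] [TopologicalSpace Z]
  {X : Type*} [AddCommGroup X] [Module ℝ X] [TopologicalSpace X]
  {zs : Z →L[ℝ] ℝ} {xs : X →L[ℝ] ℝ} {f : X → Set Z} {x₀ : X} {m : ℝ}

/-- The real numbers `x*(x) + z*(z)` with `z ∈ f x`. Their supremum is the Fenchel conjugate at `x*`
of the scalarization `φ = scalFn z* f`, that is, `sup_x (x*(x) - φ(x))`; working with the set of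
values avoids extended real arithmetic. -/
def conjValues (xs : X →L[ℝ] ℝ) (zs : Z →L[ℝ] ℝ) (f : X → Set Z) : Set ℝ :=
  ⋃ x, (fun z => xs x + zs z) '' f x

theorem add_mem_conjValues {x : X} {b : Z} (hb : b ∈ f x) : xs x + zs b ∈ conjValues xs zs f :=
  mem_iUnion.2 ⟨x, b, hb, rfl⟩

theorem isLUB_conjValues_iff_mem_upperBounds (hm : IsLUB (zs '' f x₀) m) :
    IsLUB (conjValues xs zs f) (xs x₀ + m) ↔ xs x₀ + m ∈ upperBounds (conjValues xs zs f) :=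
  ⟨And.left, fun h => ⟨h, fun _ hu => (isLUB_image_const_add hm (xs x₀)).2
    (upperBounds_mono_set (subset_iUnion (fun x => (fun z => xs x + zs z) '' f x) x₀) hu)⟩⟩

theorem Sfun_eq_halfSpace (x : X) : Sfun xs zs x = zs ⁻¹' Iic (-xs x) :=
  Set.ext fun _ => (le_neg_iff_add_nonpos_left (a := zs _)).symm

theorem Sfun_neg_eq_halfSpace (x : X) : Sfun xs zs (-x) = zs ⁻¹' Iic (xs x) := by
  rw [Sfun_eq_halfSpace, map_neg, neg_neg]

theorem isClosed_Sfun (x : X) : IsClosed (Sfun xs zs x) := by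
  rw [Sfun_eq_halfSpace]
  exact isClosed_Iic.preimage zs.continuous

theorem iUnion_add_Sfun_neg :
    ⋃ x, (f x + Sfun xs zs (-x)) = zs ⁻¹' lowerClosure (conjValues xs zs f) := by
  simp only [Sfun_neg_eq_halfSpace, add_halfSpace_eq_preimage_lowerClosure, conjValues,
    lowerClosure_iUnion, LowerSet.coe_iSup, preimage_iUnion]

variable [ContinuousAdd Z] [ContinuousSMul ℝ Z]

theorem closure_iUnion_add_Sfun_neg_eq_iff_isLUB (hzs0 : zs ≠ 0) (hm : IsLUB (zs '' f x₀) m) :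
    closure (⋃ x, (f x + Sfun xs zs (-x))) = oplus (f x₀) (Sfun xs zs (-x₀)) ↔
      IsLUB (conjValues xs zs f) (xs x₀ + m) := by
  rw [iUnion_add_Sfun_neg, closure_preimage_clm hzs0, Sfun_neg_eq_halfSpace, oplus_halfSpace hzs0,
    closure_lowerClosure_eq_Iic_iff_isLUB.2 (isLUB_image_const_add hm (xs x₀)),
    (surjective_of_clm_ne_zero hzs0).preimage_injective.eq_iff,
    closure_lowerClosure_eq_Iic_iff_isLUB]

theorem oplus_Sfun_Hset (hzs0 : zs ≠ 0) (x : X) :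
    oplus (Sfun xs zs x) (Hset zs) = Sfun xs zs x := by
  have image_eq : zs '' Sfun xs zs x = Iic (-xs x) := by
    rw [Sfun_eq_halfSpace, image_preimage_eq _ (surjective_of_clm_ne_zero hzs0)]
  rw [oplus_Hset hzs0, image_eq, closure_lowerClosure_eq_Iic_iff_isLUB.2 isLUB_Iic,
    Sfun_eq_halfSpace]

theorem resid_Sfun (hzs0 : zs ≠ 0) (x : X) (A : Set Z) :
    resid zs (Sfun xs zs x) A = (fun z => -zs z) ⁻¹' upperBounds ((fun z => xs x + zs z) '' A) := by
  ext w
  rw [resid, oplus_Sfun_Hset hzs0, mem_preimage, mem_upperBounds, forall_mem_image]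
  refine forall₂_congr fun b _ => ?_
  change xs x + zs (b + w) ≤ 0 ↔ _
  rw [map_add, ← add_assoc, le_neg_iff_add_nonpos_right]

theorem iInter_resid_Sfun_eq_iff_isLUB (hzs0 : zs ≠ 0) (hm : IsLUB (zs '' f x₀) m) :
    ⋂ x, resid zs (Sfun xs zs x) (f x) = resid zs (Sfun xs zs x₀) (f x₀) ↔
      IsLUB (conjValues xs zs f) (xs x₀ + m) := by
  have neg_zs_surjective : Function.Surjective fun z => -zs z :=
    neg_surjective.comp (surjective_of_clm_ne_zero hzs0)
  simp only [resid_Sfun hzs0]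
  rw [← preimage_iInter, ← upperBounds_iUnion, neg_zs_surjective.preimage_injective.eq_iff,
    (isLUB_image_const_add hm (xs x₀)).upperBounds_eq, upperBounds_eq_Ici_iff_isLUB, conjValues]

end Conjugates

section DirectionalDerivative

variable {Z : Type*} [AddCommGroup Z] [Module ℝ Z] [TopologicalSpace Z]
  {X : Type*} [AddCommGroup X] [Module ℝ X]
  {zs : Z →L[ℝ] ℝ} {f : X → Set Z} {x₀ : X} {m : ℝ}

theorem combo_mem_closure_image_of_convexSV (hf : ConvexSV f) (hm : m ∈ closure (zs '' f x₀))
    {x : X} {b : Z} (hb : b ∈ f x) {t : ℝ} (ht0 : 0 < t) (ht1 : t < 1) :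
    t * zs b + (1 - t) * m ∈ closure (zs '' f (t • x + (1 - t) • x₀)) := by
  refine map_mem_closure (f := fun r => t * zs b + (1 - t) * r) (by fun_prop) hm ?_
  rintro _ ⟨b₀, hb₀, rfl⟩
  refine ⟨t • b + (1 - t) • b₀, hf x x₀ t ht0 ht1 (subset_closure ?_), by simp⟩
  exact add_mem_add (smul_mem_smul_set hb) (smul_mem_smul_set hb₀)

variable [ContinuousAdd Z] [ContinuousSMul ℝ Z]

theorem mem_dirDer_of_convexSV (hzs0 : zs ≠ 0) (hf : ConvexSV f) (hx₀ : (f x₀).Nonempty)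
    (hm : IsLUB (zs '' f x₀) m) {x : X} {b w : Z} (hb : b ∈ f x) (hw : zs w = zs b - m) :
    w ∈ dirDer zs f x₀ (x - x₀) := by
  refine mem_iInter₂.2 fun s (hs : 0 < s) => subset_closure ?_
  obtain ⟨t, ht0, ht⟩ := exists_between (lt_min one_pos hs)
  obtain ⟨ht1, hts⟩ := lt_min_iff.1 ht
  refine mem_iUnion₂.2 ⟨t, ⟨ht0, hts⟩, t • w, ?_, by simp [smul_smul, ht0.ne']⟩
  have point_eq : x₀ + t • (x - x₀) = t • x + (1 - t) • x₀ := by module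
  have value_eq : m + zs (t • w) = t * zs b + (1 - t) * m := by
    rw [map_smul, smul_eq_mul, hw]
    ring
  rw [mem_resid_iff_of_isLUB hzs0 hx₀ hm, point_eq, value_eq]
  exact closure_mono subset_lowerClosure
    (combo_mem_closure_image_of_convexSV hf (hm.mem_closure (hx₀.image zs)) hb ht0 ht1)

variable [TopologicalSpace X] {xs : X →L[ℝ] ℝ}

theorem map_sub_add_map_nonpos_of_mem_resid (hzs0 : zs ≠ 0) (hx₀ : (f x₀).Nonempty)
    (hm : IsLUB (zs '' f x₀) m) (hV : xs x₀ + m ∈ upperBounds (conjValues xs zs f))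
    {x : X} {w : Z} (hw : w ∈ resid zs (f x) (f x₀)) : xs (x - x₀) + zs w ≤ 0 := by
  have image_bdd : xs x₀ + m - xs x ∈ upperBounds (zs '' f x) := by
    rintro _ ⟨b, hb, rfl⟩
    exact le_sub_iff_add_le'.2 (hV (add_mem_conjValues hb))
  rw [← upperBounds_lowerClosure, ← upperBounds_closure] at image_bdd
  have value_le := image_bdd ((mem_resid_iff_of_isLUB hzs0 hx₀ hm).1 hw)
  rw [map_sub]
  linarith

theorem dirDer_subset_Sfun (hzs0 : zs ≠ 0) (hx₀ : (f x₀).Nonempty)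
    (hm : IsLUB (zs '' f x₀) m) (hV : xs x₀ + m ∈ upperBounds (conjValues xs zs f)) (x : X) :
    dirDer zs f x₀ x ⊆ Sfun xs zs x := by
  refine (biInter_subset_of_mem (mem_Ioi.2 one_pos)).trans
    (closure_minimal (iUnion₂_subset fun t ht => ?_) (isClosed_Sfun x))
  rintro _ ⟨w, hw, rfl⟩
  have scaled : t * xs x + zs w ≤ 0 := by
    simpa using map_sub_add_map_nonpos_of_mem_resid hzs0 hx₀ hm hV hw
  change xs x + zs ((1 / t) • w) ≤ 0
  calc xs x + zs ((1 / t) • w) = (t * xs x + zs w) / t := by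
        rw [map_smul, smul_eq_mul, add_div, mul_div_cancel_left₀ _ ht.1.ne', one_div_mul_eq_div]
    _ ≤ 0 := div_nonpos_of_nonpos_of_nonneg scaled ht.1.le

theorem mem_subdiff_iff_isLUB (hzs0 : zs ≠ 0) (hf : ConvexSV f) (hx₀ : (f x₀).Nonempty)
    (hm : IsLUB (zs '' f x₀) m) :
    xs ∈ subdiff zs f x₀ ↔ IsLUB (conjValues xs zs f) (xs x₀ + m) := by
  rw [isLUB_conjValues_iff_mem_upperBounds hm]
  refine ⟨fun h v hv => ?_, dirDer_subset_Sfun hzs0 hx₀ hm⟩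
  obtain ⟨x, b, hb, rfl⟩ := mem_iUnion.1 hv
  obtain ⟨w, hw⟩ := surjective_of_clm_ne_zero hzs0 (zs b - m)
  have hS : xs (x - x₀) + zs w ≤ 0 := h _ (mem_dirDer_of_convexSV hzs0 hf hx₀ hm hb hw)
  rw [map_sub, hw] at hS
  linarith

end DirectionalDerivative

theorem stmt16_general {Z : Type*} [AddCommGroup Z] [Module ℝ Z] [TopologicalSpace Z]
    [ContinuousAdd Z] [ContinuousSMul ℝ Z]
    {X : Type*} [AddCommGroup X] [Module ℝ X] [TopologicalSpace X]
    {zs : Z →L[ℝ] ℝ} (hzs0 : zs ≠ 0) {f : X → Set Z} (hf : ConvexSV f)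
    {x₀ : X} (hx₀ : (f x₀).Nonempty) (xs : X →L[ℝ] ℝ) (hx₀H : oplus (f x₀) (Hset zs) ≠ univ) :
    (xs ∈ subdiff zs f x₀ ↔
      closure (⋃ x : X, (f x + Sfun xs zs (-x))) = oplus (f x₀) (Sfun xs zs (-x₀))) ∧
    (xs ∈ subdiff zs f x₀ ↔
      (⋂ x : X, resid zs (Sfun xs zs x) (f x)) = resid zs (Sfun xs zs x₀) (f x₀)) := by
  obtain ⟨m, hm⟩ := exists_isLUB_image_of_oplus_Hset_ne_univ hzs0 hx₀ hx₀H
  rw [mem_subdiff_iff_isLUB hzs0 hf hx₀ hm, closure_iUnion_add_Sfun_neg_eq_iff_isLUB hzs0 hm,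
    iInter_resid_Sfun_eq_iff_isLUB hzs0 hm]
  exact ⟨Iff.rfl, Iff.rfl⟩

theorem stmt16 {Z : Type*} [AddCommGroup Z] [Module ℝ Z] [TopologicalSpace Z]
    [IsTopologicalAddGroup Z] [ContinuousSMul ℝ Z] [LocallyConvexSpace ℝ Z]
    {X : Type*} [AddCommGroup X] [Module ℝ X] [TopologicalSpace X]
    [IsTopologicalAddGroup X] [ContinuousSMul ℝ X] [LocallyConvexSpace ℝ X]
    (C : Set Z) (hCconv : Convex ℝ C) (hC0 : (0:Z) ∈ C)
    (hCcone : ∀ t : ℝ, 0 < t → t • C ⊆ C) (hclC : closure C ≠ Set.univ)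
    (zs : Z →L[ℝ] ℝ) (hzs : ∀ z ∈ C, zs z ≤ 0) (hzs0 : zs ≠ 0)
    (f : X → Set Z) (hf : ConvexSV f) (hfG : ∀ x : X, f x ∈ Gset C)
    (x₀ : X) (hx₀ : f x₀ ≠ ∅) (xs : X →L[ℝ] ℝ)
    (hx₀H : oplus (f x₀) (Hset zs) ≠ Set.univ) :
    (xs ∈ subdiff zs f x₀ ↔
      closure (⋃ x : X, (f x + Sfun xs zs (-x))) = oplus (f x₀) (Sfun xs zs (-x₀))) ∧
    (xs ∈ subdiff zs f x₀ ↔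
      (⋂ x : X, resid zs (Sfun xs zs x) (f x)) = resid zs (Sfun xs zs x₀) (f x₀)) := by
  exact stmt16_general hzs0 hf (nonempty_iff_ne_empty.2 hx₀) xs hx₀H
end

section
/- Let f : X → G(Z,C) be convex, x₀ ∈ dom f, z* ∈ C⁻ \ {0}, and define the sublinear map F(x) = f'_{z*}(x₀, x) and its adjoint process F^◇(u*) = {x* ∈ X* : x*(x) ≤ u*(z) for all x ∈ X and all z ∈ F(x)} for u* ∈ Z*. Then: F^◇(u*) = ∅ if u* ∉ {−s z* : s ≥ 0}; F^◇(0) = {x* ∈ X* : x*(y) ≤ 0 for all y ∈ ⋃_{t>0} t·(dom f − x₀)} (the negative polar cone of cone(dom f − x₀)); and F^◇(−s z*) = s·∂_{z*} f(x₀) for every s > 0. -/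
open Set Topology Pointwise

/-!
The domain of `F = f'_{z*}(x₀, ·)` is the cone generated by `dom f - x₀`: convexity bounds from
below the difference quotients of `x ↦ sup z*(f x)` along a segment from `x₀` to a point of
`dom f`; if the supremum at `x₀` is infinite, it is infinite on the whole half-open segment, and
nothing is constrained. As `F^◇(0)` only sees the domain of `F`, it is the negative polar of
this cone. Moreover `H(z*) ⊆ F(0)`, so any `u*` with `F^◇(u*) ≠ ∅` is nonnegative on the
half-space `H(z*)`, hence a nonpositive multiple of `z*`. Finally `F^◇` is positively
homogeneous and `F^◇(-z*)` is the subdifferential.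
-/

section HalfSpace

variable {Z : Type*} [AddCommGroup Z] [Module ℝ Z] [TopologicalSpace Z]
  {zs us : Z →L[ℝ] ℝ} {A B : Set Z} {z : Z}

theorem exists_eq_neg_smul_of_nonneg_on_Hset (h : ∀ z ∈ Hset zs, 0 ≤ us z) :
    ∃ s : ℝ, 0 ≤ s ∧ us = -(s • zs) := by
  have us_eq_zero_of_zs_eq_zero (v : Z) (hv : zs v = 0) : us v = 0 := by
    have h_neg : 0 ≤ us (-v) := h (-v) (by simp [Hset, hv])
    rw [map_neg] at h_neg
    exact le_antisymm (by linarith) (h v hv.le)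
  obtain rfl | hzs := eq_or_ne zs 0
  · exact ⟨0, le_rfl, by ext v; simpa using us_eq_zero_of_zs_eq_zero v rfl⟩
  · obtain ⟨w, hw⟩ : ∃ w, zs w = -1 :=
      LinearMap.surjective (f := zs.toLinearMap) (mod_cast hzs) (-1)
    refine ⟨us w, h w (by simp [Hset, hw]), ?_⟩
    ext v
    have hv := us_eq_zero_of_zs_eq_zero (v + zs v • w) (by simp [hw])
    simp only [map_add, map_smul, smul_eq_mul] at hv
    simp only [neg_apply, smul_apply, smul_eq_mul]
    linarith

theorem mem_resid_of_forall_exists_le (h : ∀ b ∈ B, ∃ a ∈ A, zs (b + z) ≤ zs a) :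
    z ∈ resid zs A B := by
  intro b hb
  obtain ⟨a, ha, hba⟩ := h b hb
  refine subset_closure ⟨a, ha, b + z - a, ?_, add_sub_cancel a _⟩
  simpa [Hset] using hba

theorem nonempty_of_resid_nonempty (hB : B.Nonempty) (h : (resid zs A B).Nonempty) :
    A.Nonempty := by
  obtain ⟨b, hb⟩ := hB
  obtain ⟨z, hz⟩ := h
  exact (closure_nonempty_iff.mp ⟨_, hz b hb⟩).of_image2_left

theorem exists_forall_apply_add_smul_le_convex_combination (zs : Z →L[ℝ] ℝ) (a : Z) (B : Set Z) :
    ∃ z, ∀ r ∈ Ioo (0 : ℝ) 1, ∀ b ∈ B, ∃ b' ∈ B,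
      zs (b + r • z) ≤ zs (r • a + (1 - r) • b') := by
  simp only [map_add, map_smul, smul_eq_mul]
  obtain rfl | hzs := eq_or_ne zs 0
  · exact ⟨0, fun r _ b hb ↦ ⟨b, hb, by simp⟩⟩
  by_cases hbdd : BddAbove (zs '' B)
  · obtain ⟨M, hM⟩ := hbdd
    obtain ⟨z, hz⟩ : ∃ z, zs z = zs a - M :=
      LinearMap.surjective (f := zs.toLinearMap) (mod_cast hzs) _
    refine ⟨z, fun r hr b hb ↦ ⟨b, hb, ?_⟩⟩
    have hbM : r * zs b ≤ r * M := mul_le_mul_of_nonneg_left (hM ⟨b, hb, rfl⟩) hr.1.le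
    rw [hz]
    linarith
  · refine ⟨0, fun r hr b _ ↦ ?_⟩
    obtain ⟨_, ⟨b', hb', rfl⟩, hlt⟩ := not_bddAbove_iff.mp hbdd ((zs b - r * zs a) / (1 - r))
    rw [div_lt_iff₀ (sub_pos.mpr hr.2)] at hlt
    refine ⟨b', hb', ?_⟩
    rw [map_zero]
    linarith

end HalfSpace

section DirectionalDerivative

variable {Z : Type*} [AddCommGroup Z] [Module ℝ Z] [TopologicalSpace Z]
  {X : Type*} [AddCommGroup X] [Module ℝ X]
  {zs : Z →L[ℝ] ℝ} {f : X → Set Z} {x₀ x v : X} {z : Z}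

theorem mem_dirDer_of_frequently
    (h : ∃ᶠ t in 𝓝[>] (0 : ℝ), t • z ∈ resid zs (f (x₀ + t • x)) (f x₀)) :
    z ∈ dirDer zs f x₀ x := by
  refine mem_iInter₂.mpr fun s hs ↦ subset_closure ?_
  obtain ⟨t, htz, ht⟩ := (h.and_eventually (Ioo_mem_nhdsGT hs)).exists
  refine mem_iUnion₂.mpr ⟨t, ht, t • z, htz, ?_⟩
  simp [smul_smul, ht.1.ne']

theorem Hset_subset_dirDer_zero (zs : Z →L[ℝ] ℝ) (f : X → Set Z) (x₀ : X) :
    Hset zs ⊆ dirDer zs f x₀ 0 := by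
  intro z hz
  refine mem_dirDer_of_frequently (Filter.Eventually.frequently ?_)
  filter_upwards [self_mem_nhdsWithin] with t ht
  refine mem_resid_of_forall_exists_le fun b hb ↦ ⟨b, by simpa using hb, ?_⟩
  simpa using mul_nonpos_of_nonneg_of_nonpos (le_of_lt ht) hz

theorem exists_nonempty_of_dirDer_nonempty (hx₀ : (f x₀).Nonempty)
    (h : (dirDer zs f x₀ x).Nonempty) : ∃ t : ℝ, 0 < t ∧ (f (x₀ + t • x)).Nonempty := by
  obtain ⟨z, hz⟩ := h
  obtain ⟨z', hz'⟩ := closure_nonempty_iff.mp ⟨z, mem_iInter₂.mp hz 1 (mem_Ioi.mpr one_pos)⟩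
  obtain ⟨t, ht, hz't⟩ := mem_iUnion₂.mp hz'
  exact ⟨t, ht.1, nonempty_of_resid_nonempty hx₀ (smul_set_nonempty.mp ⟨z', hz't⟩)⟩

theorem exists_forall_smul_mem_resid (zs : Z →L[ℝ] ℝ) (hf : ConvexSV f)
    (hv : (f (x₀ + v)).Nonempty) :
    ∃ z, ∀ r ∈ Ioo (0 : ℝ) 1, r • z ∈ resid zs (f (x₀ + r • v)) (f x₀) := by
  obtain ⟨a, ha⟩ := hv
  obtain ⟨z, hz⟩ := exists_forall_apply_add_smul_le_convex_combination zs a (f x₀)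
  refine ⟨z, fun r hr ↦ mem_resid_of_forall_exists_le fun b hb ↦ ?_⟩
  obtain ⟨b', hb', hle⟩ := hz r hr b hb
  refine ⟨r • a + (1 - r) • b', ?_, hle⟩
  have segment_point : x₀ + r • v = r • (x₀ + v) + (1 - r) • x₀ := by module
  rw [segment_point]
  exact hf _ _ r hr.1 hr.2
    (subset_closure (add_mem_add (smul_mem_smul_set ha) (smul_mem_smul_set hb')))

theorem dirDer_nonempty_of_nonempty (zs : Z →L[ℝ] ℝ) (hf : ConvexSV f) {τ : ℝ} (hτ : 0 < τ)
    (h : (f (x₀ + τ • x)).Nonempty) : (dirDer zs f x₀ x).Nonempty := by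
  obtain ⟨z, hz⟩ := exists_forall_smul_mem_resid zs hf h
  refine ⟨τ⁻¹ • z, mem_dirDer_of_frequently (Filter.Eventually.frequently ?_)⟩
  filter_upwards [Ioo_mem_nhdsGT hτ] with t ht
  have quotient_mem := hz (t / τ) ⟨div_pos ht.1 hτ, (div_lt_one hτ).mpr ht.2⟩
  rwa [smul_smul, div_mul_cancel₀ _ hτ.ne', div_eq_mul_inv, ← smul_smul] at quotient_mem

theorem mem_iUnion_smul_sub_singleton_iff {D : Set X} :
    x ∈ ⋃ t ∈ Ioi (0 : ℝ), t • (D - {x₀}) ↔ ∃ t : ℝ, 0 < t ∧ x₀ + t • x ∈ D := by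
  have mem_smul_iff (t : ℝ) (ht : 0 < t) : x ∈ t • (D - {x₀}) ↔ x₀ + t⁻¹ • x ∈ D := by
    simp [mem_smul_set_iff_inv_smul_mem₀ ht.ne', sub_singleton, sub_eq_iff_eq_add']
  simp only [mem_iUnion₂, mem_Ioi, exists_prop]
  constructor
  · rintro ⟨t, ht, hx⟩
    exact ⟨t⁻¹, inv_pos.mpr ht, (mem_smul_iff t ht).mp hx⟩
  · rintro ⟨t, ht, hx⟩
    exact ⟨t⁻¹, inv_pos.mpr ht, (mem_smul_iff _ (inv_pos.mpr ht)).mpr (by rwa [inv_inv])⟩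

theorem dirDer_nonempty_iff (zs : Z →L[ℝ] ℝ) (hf : ConvexSV f) (hx₀ : (f x₀).Nonempty) :
    (dirDer zs f x₀ x).Nonempty ↔
      x ∈ ⋃ t ∈ Ioi (0 : ℝ), t • ({x | f x ≠ ∅} - {x₀}) := by
  simp only [mem_iUnion_smul_sub_singleton_iff, mem_ofPred_eq, ← nonempty_iff_ne_empty]
  exact ⟨exists_nonempty_of_dirDer_nonempty hx₀,
    fun ⟨_, ht, hxt⟩ ↦ dirDer_nonempty_of_nonempty zs hf ht hxt⟩

end DirectionalDerivative

section AdjointProcess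

variable {Z : Type*} [AddCommGroup Z] [Module ℝ Z] [TopologicalSpace Z]
  {X : Type*} [AddCommGroup X] [Module ℝ X] [TopologicalSpace X]

/-- The adjoint process `F^◇` of a set-valued map `F`: its value at `u*` consists of the continuous
functionals `x*` for which `(x, z) ↦ x*(x) - u*(z)` is nonpositive on the graph of `F`. -/
def adjointProcess (F : X → Set Z) (us : Z →L[ℝ] ℝ) : Set (X →L[ℝ] ℝ) :=
  {xs | ∀ x, ∀ z ∈ F x, xs x ≤ us z}

theorem adjointProcess_zero (F : X → Set Z) :
    adjointProcess F 0 = {xs | ∀ x, (F x).Nonempty → xs x ≤ 0} := by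
  ext xs
  simp [adjointProcess, Set.Nonempty]

theorem adjointProcess_smul (F : X → Set Z) (us : Z →L[ℝ] ℝ) {s : ℝ} (hs : 0 < s) :
    adjointProcess F (s • us) = s • adjointProcess F us := by
  ext xs
  rw [mem_smul_set_iff_inv_smul_mem₀ hs.ne']
  simp only [adjointProcess, mem_ofPred_eq, smul_apply, smul_eq_mul,
    inv_mul_le_iff₀ hs]

theorem adjointProcess_dirDer_neg (zs : Z →L[ℝ] ℝ) (f : X → Set Z) (x₀ : X) :
    adjointProcess (dirDer zs f x₀) (-zs) = subdiff zs f x₀ := by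
  ext xs
  simp only [adjointProcess, subdiff, Sfun, subset_def, mem_ofPred_eq,
    neg_apply, le_neg_iff_add_nonpos_right]

theorem exists_eq_neg_smul_of_adjointProcess_dirDer_nonempty {zs us : Z →L[ℝ] ℝ}
    {f : X → Set Z} {x₀ : X} (h : (adjointProcess (dirDer zs f x₀) us).Nonempty) :
    ∃ s : ℝ, 0 ≤ s ∧ us = -(s • zs) := by
  obtain ⟨xs, hxs⟩ := h
  refine exists_eq_neg_smul_of_nonneg_on_Hset fun z hz ↦ ?_
  simpa using hxs 0 z (Hset_subset_dirDer_zero zs f x₀ hz)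

theorem stmt17_general (zs : Z →L[ℝ] ℝ) {f : X → Set Z} (hf : ConvexSV f) {x₀ : X}
    (hx₀ : (f x₀).Nonempty) :
    (∀ us : Z →L[ℝ] ℝ, (∀ s : ℝ, 0 ≤ s → us ≠ -(s • zs)) →
      adjointProcess (dirDer zs f x₀) us = ∅) ∧
    adjointProcess (dirDer zs f x₀) 0 =
      {xs | ∀ y ∈ ⋃ t ∈ Ioi (0 : ℝ), t • ({x | f x ≠ ∅} - {x₀}), xs y ≤ 0} ∧
    ∀ s : ℝ, 0 < s →
      adjointProcess (dirDer zs f x₀) (-(s • zs)) = s • subdiff zs f x₀ := by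
  refine ⟨fun us hus ↦ ?_, ?_, fun s hs ↦ ?_⟩
  · by_contra hne
    obtain ⟨s, hs, hus_eq⟩ :=
      exists_eq_neg_smul_of_adjointProcess_dirDer_nonempty (nonempty_iff_ne_empty.mpr hne)
    exact hus s hs hus_eq
  · simp only [adjointProcess_zero, dirDer_nonempty_iff zs hf hx₀]
  · rw [← smul_neg s zs, adjointProcess_smul _ _ hs, adjointProcess_dirDer_neg]

end AdjointProcess

theorem stmt17 {Z : Type*} [AddCommGroup Z] [Module ℝ Z] [TopologicalSpace Z]
    [IsTopologicalAddGroup Z] [ContinuousSMul ℝ Z] [LocallyConvexSpace ℝ Z]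
    {X : Type*} [AddCommGroup X] [Module ℝ X] [TopologicalSpace X]
    [IsTopologicalAddGroup X] [ContinuousSMul ℝ X] [LocallyConvexSpace ℝ X]
    (C : Set Z) (hCconv : Convex ℝ C) (hC0 : (0:Z) ∈ C)
    (hCcone : ∀ t : ℝ, 0 < t → t • C ⊆ C) (hclC : closure C ≠ Set.univ)
    (zs : Z →L[ℝ] ℝ) (hzs : ∀ z ∈ C, zs z ≤ 0) (hzs0 : zs ≠ 0)
    (f : X → Set Z) (hf : ConvexSV f) (hfG : ∀ x : X, f x ∈ Gset C)
    (x₀ : X) (hx₀ : f x₀ ≠ ∅) :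
    (∀ us : Z →L[ℝ] ℝ, (∀ s : ℝ, 0 ≤ s → us ≠ -(s • zs)) →
      {xs : X →L[ℝ] ℝ | ∀ x : X, ∀ z ∈ dirDer zs f x₀ x, xs x ≤ us z} = ∅) ∧
    ({xs : X →L[ℝ] ℝ | ∀ x : X, ∀ z ∈ dirDer zs f x₀ x, xs x ≤ (0 : Z →L[ℝ] ℝ) z} =
      {xs : X →L[ℝ] ℝ |
        ∀ y ∈ ⋃ t ∈ Set.Ioi (0:ℝ), t • ({x : X | f x ≠ ∅} - {x₀}), xs y ≤ 0}) ∧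
    (∀ s : ℝ, 0 < s →
      {xs : X →L[ℝ] ℝ | ∀ x : X, ∀ z ∈ dirDer zs f x₀ x, xs x ≤ (-(s • zs)) z} =
        s • subdiff zs f x₀) := by
  exact stmt17_general zs hf (nonempty_iff_ne_empty.mpr hx₀)
end

section
/- Let f : X → G(Z,C) be convex, z* ∈ C⁻ \ {0} and x₀ ∈ dom f. The following are equivalent: (a) x₀ is a z*-solution, i.e., f(x₀) ⊕ H(z*) = (cl co ⋃_{x ∈ X} f(x)) ⊕ H(z*); (b) dom f = ∅, or f(x₀) ⊕ H(z*) = Z, or H(z*) ⊇ f'_{z*}(x₀, x) for all x ∈ X; (c) dom f = ∅, or f(x₀) ⊕ H(z*) = Z, or 0 ∈ ∂_{z*} f(x₀). -/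
open Set Topology Pointwise

/-!
Passing from `A` to `A ⊕ H(z*)` only remembers the supremum of `z*` over `A`, so `x₀` is a
`z*`-solution exactly when `f x ⊆ f x₀ ⊕ H(z*)` for every `x`. Convexity of `f` makes the difference
quotients grow as the step shrinks, hence all the derivatives lie in `H(z*)` exactly when all the
residuals `f x −_{z*} f x₀` do. Comparing suprema of `z*`, a residual `A −_{z*} B` lies in `H(z*)`
exactly when `A ⊆ B ⊕ H(z*)`, unless `B` is empty or `B ⊕ H(z*) = Z`.
-/

section HalfSpace

variable {Z : Type*} [AddCommGroup Z] [Module ℝ Z] [TopologicalSpace Z] {zs : Z →L[ℝ] ℝ}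

theorem isClosed_Hset : IsClosed (Hset zs) :=
  isClosed_le zs.continuous continuous_const

theorem smul_mem_Hset {t : ℝ} (ht : 0 ≤ t) {z : Z} (hz : z ∈ Hset zs) : t • z ∈ Hset zs := by
  change zs (t • z) ≤ 0
  rw [map_smul, smul_eq_mul]
  exact mul_nonpos_of_nonneg_of_nonpos ht hz

variable {A B : Set Z}

theorem subset_oplus_Hset : A ⊆ oplus A (Hset zs) := fun a ha =>
  subset_closure (mem_add.2 ⟨a, ha, 0, (map_zero zs).le, add_zero a⟩)

variable [ContinuousAdd Z] [ContinuousSMul ℝ Z]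

theorem mem_oplus_Hset_iff_s18 {z : Z} :
    z ∈ oplus A (Hset zs) ↔ ∀ c < zs z, ∃ a ∈ A, c < zs a := by
  have mem_add_of_le : ∀ u, ∀ a ∈ A, zs u ≤ zs a → u ∈ A + Hset zs := fun u a ha hua =>
    mem_add.2 ⟨a, ha, u - a, by simpa [Hset] using hua, add_sub_cancel a u⟩
  refine ⟨fun hz c hc => ?_, fun hA => ?_⟩
  · obtain ⟨_, hw, a, ha, h, hh, rfl⟩ :=
      mem_closure_iff.1 hz {w | c < zs w} (isOpen_lt continuous_const zs.continuous) hc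
    have hh : zs h ≤ 0 := hh
    have hw : c < zs (a + h) := hw
    rw [map_add] at hw
    exact ⟨a, ha, by linarith⟩
  · by_cases hzs0 : zs = 0
    · obtain ⟨a, ha, -⟩ := hA _ (sub_one_lt _)
      exact subset_closure (mem_add_of_le z a ha (by simp [hzs0]))
    · refine mem_closure_iff_nhds.2 fun U hU => ?_
      have hzsU : zs '' U ∈ 𝓝 (zs z) := (zs.isOpenMap_of_ne_zero hzs0).image_mem_nhds hU
      obtain ⟨_, hlt, u, hu, rfl⟩ := Filter.Eventually.exists_lt hzsU
      obtain ⟨a, ha, hua⟩ := hA _ hlt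
      exact ⟨u, hu, mem_add_of_le u a ha hua.le⟩

theorem oplus_Hset_subset_iff : oplus A (Hset zs) ⊆ oplus B (Hset zs) ↔ A ⊆ oplus B (Hset zs) := by
  refine ⟨subset_oplus_Hset.trans, fun hAB z hz => mem_oplus_Hset_iff_s18.2 fun c hc => ?_⟩
  obtain ⟨a, ha, hca⟩ := mem_oplus_Hset_iff_s18.1 hz c hc
  exact mem_oplus_Hset_iff_s18.1 (hAB ha) c hca

theorem convex_oplus_Hset : Convex ℝ (oplus A (Hset zs)) := by
  have eq_preimage : oplus A (Hset zs) = zs ⁻¹' {r | ∀ c < r, ∃ a ∈ A, c < zs a} :=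
    Set.ext fun _ => mem_oplus_Hset_iff_s18
  have isLowerSet : IsLowerSet {r | ∀ c < r, ∃ a ∈ A, c < zs a} :=
    fun _ _ hle hr c hc => hr c (hc.trans_le hle)
  rw [eq_preimage]
  exact isLowerSet.ordConnected.convex.linear_preimage zs.toLinearMap

theorem oplus_Hset_eq_oplus_closure_convexHull_iUnion_iff {ι : Type*} {F : ι → Set Z} {i : ι} :
    oplus (F i) (Hset zs) = oplus (closure (convexHull ℝ (⋃ j, F j))) (Hset zs) ↔
      ∀ j, F j ⊆ oplus (F i) (Hset zs) := by
  have subset_hull : ∀ j, F j ⊆ closure (convexHull ℝ (⋃ j, F j)) := fun j =>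
    (subset_iUnion F j).trans ((subset_convexHull ℝ _).trans subset_closure)
  refine ⟨fun heq j => ?_, fun hsub => subset_antisymm ?_ ?_⟩
  · rw [heq]
    exact (subset_hull j).trans subset_oplus_Hset
  · exact oplus_Hset_subset_iff.2 ((subset_hull i).trans subset_oplus_Hset)
  · exact oplus_Hset_subset_iff.2
      (closure_minimal (convexHull_min (iUnion_subset hsub) convex_oplus_Hset) isClosed_closure)

theorem bddAbove_image_of_oplus_Hset_ne_univ (hB : oplus B (Hset zs) ≠ univ) :
    BddAbove (zs '' B) := by
  obtain ⟨w, hw⟩ := (ne_univ_iff_exists_notMem _).1 hB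
  rw [mem_oplus_Hset_iff_s18] at hw
  push Not at hw
  obtain ⟨c, -, hc⟩ := hw
  exact ⟨c, forall_mem_image.2 hc⟩

theorem resid_subset_Hset (hBne : B.Nonempty) (hB : oplus B (Hset zs) ≠ univ)
    (hAB : A ⊆ oplus B (Hset zs)) : resid zs A B ⊆ Hset zs := by
  intro r hr
  by_contra hpos
  have hpos : 0 < zs r := not_le.1 hpos
  obtain ⟨_, ⟨b, hb, rfl⟩, hlt⟩ :=
    exists_lt_of_lt_csSup (hBne.image zs) (sub_lt_self (sSup (zs '' B)) hpos)
  have hbr : b + r ∈ oplus B (Hset zs) := oplus_Hset_subset_iff.2 hAB (hr b hb)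
  obtain ⟨b', hb', hlt'⟩ :=
    mem_oplus_Hset_iff_s18.1 hbr (sSup (zs '' B)) (by rw [map_add]; linarith)
  exact hlt'.not_ge
    (le_csSup (bddAbove_image_of_oplus_Hset_ne_univ hB) (mem_image_of_mem zs hb'))

theorem subset_oplus_Hset_of_resid_subset_Hset (hzs0 : zs ≠ 0)
    (hres : resid zs A B ⊆ Hset zs) : A ⊆ oplus B (Hset zs) := by
  intro y hy
  by_contra hyB
  rw [mem_oplus_Hset_iff_s18] at hyB
  push Not at hyB
  obtain ⟨c, hcy, hBc⟩ := hyB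
  obtain ⟨z, hz⟩ : ∃ z, zs z = zs y - c :=
    LinearMap.surjective (f := zs.toLinearMap) (by exact_mod_cast hzs0) _
  have hzres : z ∈ resid zs A B := fun b hb =>
    mem_oplus_Hset_iff_s18.2 fun d hd => ⟨y, hy, by
      rw [map_add, hz] at hd
      linarith [hBc b hb]⟩
  have hz0 : zs z ≤ 0 := hres hzres
  linarith

theorem forall_subset_oplus_Hset_iff {ι : Type*} {F : ι → Set Z} {i : ι} (hzs0 : zs ≠ 0) :
    (∀ j, F j ⊆ oplus (F i) (Hset zs)) ↔
      (∀ j, F j = ∅) ∨ oplus (F i) (Hset zs) = univ ∨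
        ∀ j, resid zs (F j) (F i) ⊆ Hset zs := by
  constructor
  · intro hsub
    rcases (F i).eq_empty_or_nonempty with hempty | hne
    · exact Or.inl fun j => subset_empty_iff.1 (by simpa [hempty, oplus] using hsub j)
    · exact Or.inr (or_iff_not_imp_left.2 fun hB j => resid_subset_Hset hne hB (hsub j))
  · rintro (hempty | huniv | hres) j
    · simp [hempty j]
    · simp [huniv]
    · exact subset_oplus_Hset_of_resid_subset_Hset hzs0 (hres j)

end HalfSpace

section DirectionalDerivative

variable {X Z : Type*} [AddCommGroup X] [Module ℝ X]
  [AddCommGroup Z] [Module ℝ Z] [TopologicalSpace Z] {zs : Z →L[ℝ] ℝ} {f : X → Set Z} {x₀ x : X}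

theorem dirDer_subset_Hset (hres : ∀ t : ℝ, 0 < t → resid zs (f (x₀ + t • x)) (f x₀) ⊆ Hset zs) :
    dirDer zs f x₀ x ⊆ Hset zs := by
  refine (biInter_subset_of_mem (mem_Ioi.2 one_pos)).trans
    (closure_minimal (iUnion₂_subset fun t ht => ?_) isClosed_Hset)
  rintro _ ⟨r, hr, rfl⟩
  exact smul_mem_Hset (one_div_pos.2 ht.1).le (hres t ht.1 hr)

theorem zero_mem_subdiff_iff [TopologicalSpace X] :
    0 ∈ subdiff zs f x₀ ↔ ∀ x, dirDer zs f x₀ x ⊆ Hset zs := by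
  simp [subdiff, Sfun, Hset]

variable [ContinuousAdd Z] [ContinuousSMul ℝ Z]

theorem ConvexSV.smul_mem_resid (hf : ConvexSV f) {t : ℝ} (ht0 : 0 < t) (ht1 : t < 1) {z : Z}
    (hz : z ∈ resid zs (f x) (f x₀)) :
    t • z ∈ resid zs (f (x₀ + t • (x - x₀))) (f x₀) := by
  intro b hb
  refine mem_oplus_Hset_iff_s18.2 fun c hc => ?_
  have hc' : (c - (1 - t) * zs b) / t < zs (b + z) := by
    rw [div_lt_iff₀ ht0]
    simp only [map_add, map_smul, smul_eq_mul] at hc ⊢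
    linarith
  obtain ⟨y, hy, hlt⟩ := mem_oplus_Hset_iff_s18.1 (hz b hb) _ hc'
  refine ⟨t • y + (1 - t) • b, ?_, ?_⟩
  · have hpoint : x₀ + t • (x - x₀) = t • x + (1 - t) • x₀ := by module
    rw [hpoint]
    exact hf x x₀ t ht0 ht1
      (subset_closure (add_mem_add (smul_mem_smul_set hy) (smul_mem_smul_set hb)))
  · rw [div_lt_iff₀ ht0] at hlt
    simp only [map_add, map_smul, smul_eq_mul]
    linarith

theorem ConvexSV.resid_subset_dirDer (hf : ConvexSV f) :
    resid zs (f x) (f x₀) ⊆ dirDer zs f x₀ (x - x₀) := by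
  refine fun z hz => mem_iInter₂.2 fun s hs => subset_closure ?_
  obtain ⟨t, ht0, ht⟩ := exists_between (lt_min (mem_Ioi.1 hs) one_pos)
  obtain ⟨hts, ht1⟩ := lt_min_iff.1 ht
  refine mem_iUnion₂.2 ⟨t, ⟨ht0, hts⟩, t • z, hf.smul_mem_resid ht0 ht1 hz, ?_⟩
  simp [smul_smul, ht0.ne']

theorem ConvexSV.forall_dirDer_subset_Hset_iff (hf : ConvexSV f) :
    (∀ x, dirDer zs f x₀ x ⊆ Hset zs) ↔ ∀ x, resid zs (f x) (f x₀) ⊆ Hset zs :=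
  ⟨fun hder x => hf.resid_subset_dirDer.trans (hder (x - x₀)),
    fun hres _ => dirDer_subset_Hset fun _ _ => hres _⟩

end DirectionalDerivative

theorem stmt18_general {Z : Type*} [AddCommGroup Z] [Module ℝ Z] [TopologicalSpace Z]
    [ContinuousAdd Z] [ContinuousSMul ℝ Z]
    {X : Type*} [AddCommGroup X] [Module ℝ X] [TopologicalSpace X]
    {zs : Z →L[ℝ] ℝ} (hzs0 : zs ≠ 0) {f : X → Set Z} (hf : ConvexSV f) (x₀ : X) :
    List.TFAE [
      oplus (f x₀) (Hset zs) = oplus (closure (convexHull ℝ (⋃ x : X, f x))) (Hset zs),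
      (∀ x : X, f x = ∅) ∨ oplus (f x₀) (Hset zs) = univ ∨ ∀ x : X, dirDer zs f x₀ x ⊆ Hset zs,
      (∀ x : X, f x = ∅) ∨ oplus (f x₀) (Hset zs) = univ ∨
        (0 : X →L[ℝ] ℝ) ∈ subdiff zs f x₀] := by
  tfae_have 1 ↔ 2 := by
    rw [oplus_Hset_eq_oplus_closure_convexHull_iUnion_iff, forall_subset_oplus_Hset_iff hzs0,
      hf.forall_dirDer_subset_Hset_iff]
  tfae_have 2 ↔ 3 := by rw [zero_mem_subdiff_iff]
  tfae_finish

theorem stmt18 {Z : Type*} [AddCommGroup Z] [Module ℝ Z] [TopologicalSpace Z]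
    [IsTopologicalAddGroup Z] [ContinuousSMul ℝ Z] [LocallyConvexSpace ℝ Z]
    {X : Type*} [AddCommGroup X] [Module ℝ X] [TopologicalSpace X]
    [IsTopologicalAddGroup X] [ContinuousSMul ℝ X] [LocallyConvexSpace ℝ X]
    (C : Set Z) (hCconv : Convex ℝ C) (hC0 : (0:Z) ∈ C)
    (hCcone : ∀ t : ℝ, 0 < t → t • C ⊆ C) (hclC : closure C ≠ Set.univ)
    (zs : Z →L[ℝ] ℝ) (hzs : ∀ z ∈ C, zs z ≤ 0) (hzs0 : zs ≠ 0)
    (f : X → Set Z) (hf : ConvexSV f) (hfG : ∀ x : X, f x ∈ Gset C)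
    (x₀ : X) (hx₀ : f x₀ ≠ ∅) :
    ((oplus (f x₀) (Hset zs) =
        oplus (closure (convexHull ℝ (⋃ x : X, f x))) (Hset zs)) ↔
      ((∀ x : X, f x = ∅) ∨ oplus (f x₀) (Hset zs) = Set.univ ∨
        ∀ x : X, dirDer zs f x₀ x ⊆ Hset zs)) ∧
    ((oplus (f x₀) (Hset zs) =
        oplus (closure (convexHull ℝ (⋃ x : X, f x))) (Hset zs)) ↔
      ((∀ x : X, f x = ∅) ∨ oplus (f x₀) (Hset zs) = Set.univ ∨
        (0 : X →L[ℝ] ℝ) ∈ subdiff zs f x₀)) := by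
  have htfae := stmt18_general hzs0 hf x₀
  exact ⟨htfae.out 0 1, htfae.out 0 2⟩
end
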